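/- arXiv:2503.01663 — 4 statements merged into one kernel-verified Lean document; each statement's English description precedes it below -/
import Mathlib

section
/- Let H = {1,…,m} and L = {1,…,n} be finite sets, let Π = (π₁,…,π_m) and Π′ = (π′₁,…,π′_m) be tuples of partitions of L, let p = (p₁,…,p_m) ∈ [0,1]^m, and let F = (f₁,…,f_n) be an aligned tuple of nonnegative real-valued functions on the power set of H. If Π′ is coarser than Π, then E(Π′,p,F) ≥ E(Π,p,F). -/
open Finset

/-- Weight of a block `M` of a partition relative to a turnout set `S`. -/
def blockWeight {n : ℕ} (p : ℝ) (M S : Finset (Fin n)) : ℝ :=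
  if M ⊆ S then p else if M ∩ S = ∅ then 1 - p else 0

/-- The measure `μ_{π,p}` on subsets of `L = Fin n`. -/
def partMeasure {n : ℕ} (pt : Finpartition (univ : Finset (Fin n))) (p : ℝ)
    (S : Finset (Fin n)) : ℝ :=
  ∏ M ∈ pt.parts, blockWeight p M S

/-- `L_h(T) = {l : (h,l) ∈ T}`. -/
def Lh {m n : ℕ} (h : Fin m) (T : Finset (Fin m × Fin n)) : Finset (Fin n) :=
  univ.filter fun l => (h, l) ∈ T

/-- `H_l(T) = {h : (h,l) ∈ T}`. -/
def Hl {m n : ℕ} (l : Fin n) (T : Finset (Fin m × Fin n)) : Finset (Fin m) :=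
  univ.filter fun h => (h, l) ∈ T

/-- The measure `μ_{Π,p}` on subsets of `H × L`. -/
def schedMeasure {m n : ℕ} (Sch : Fin m → Finpartition (univ : Finset (Fin n)))
    (p : Fin m → ℝ) (T : Finset (Fin m × Fin n)) : ℝ :=
  ∏ h, partMeasure (Sch h) (p h) (Lh h T)

/-- `E(Π, p, F)`. -/
def schedExp {m n : ℕ} (Sch : Fin m → Finpartition (univ : Finset (Fin n)))
    (p : Fin m → ℝ) (F : Fin n → Finset (Fin m) → ℝ) : ℝ :=
  ∑ T : Finset (Fin m × Fin n), (∏ l, F l (Hl l T)) * schedMeasure Sch p T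

def IncreasingAt {m : ℕ} (f : Finset (Fin m) → ℝ) (h : Fin m) : Prop :=
  ∀ S : Finset (Fin m), f S ≤ f (insert h S)

def DecreasingAt {m : ℕ} (f : Finset (Fin m) → ℝ) (h : Fin m) : Prop :=
  ∀ S : Finset (Fin m), f (insert h S) ≤ f S

def Aligned {m n : ℕ} (F : Fin n → Finset (Fin m) → ℝ) : Prop :=
  ∀ h : Fin m, (∀ l, IncreasingAt (F l) h) ∨ (∀ l, DecreasingAt (F l) h)

/-- `Sch'` is coarser than `Sch`. -/
def Coarser {m n : ℕ} (Sch' Sch : Fin m → Finpartition (univ : Finset (Fin n))) : Prop :=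
  ∀ h, ∀ M ∈ (Sch h).parts, ∃ M' ∈ (Sch' h).parts, M ⊆ M'

/-- Product Bernoulli measure on subsets of `H = Fin m`. -/
def bern {m : ℕ} (p : Fin m → ℝ) (S : Finset (Fin m)) : ℝ :=
  (∏ h ∈ S, p h) * ∏ h ∈ Sᶜ, (1 - p h)

/-- Expectation with respect to the product Bernoulli measure. -/
def bernExp {m : ℕ} (p : Fin m → ℝ) (f : Finset (Fin m) → ℝ) : ℝ :=
  ∑ S : Finset (Fin m), f S * bern p S


/-- Two-point Harris inequality: the mixture of two products of comonotone nonnegative factors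
dominates the product of the mixtures. -/
lemma prod_mix_le_mix_prod {ι : Type*} (s : Finset ι) {p q : ℝ} (hp : 0 ≤ p) (hq : 0 ≤ q)
    (hpq : p + q = 1) (A B : ι → ℝ) (hB : ∀ i, 0 ≤ B i) (hAB : ∀ i, B i ≤ A i) :
    ∏ i ∈ s, (p * A i + q * B i) ≤ p * ∏ i ∈ s, A i + q * ∏ i ∈ s, B i := by
  classical
  induction s using Finset.induction_on with
  | empty => simp [hpq]
  | insert i s hi ih =>
    simp only [prod_insert hi]
    have hprod : ∏ j ∈ s, B j ≤ ∏ j ∈ s, A j :=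
      prod_le_prod (fun j _ => hB j) fun j _ => hAB j
    have hmix : 0 ≤ p * A i + q * B i :=
      add_nonneg (mul_nonneg hp ((hB i).trans (hAB i))) (mul_nonneg hq (hB i))
    refine (mul_le_mul_of_nonneg_left ih hmix).trans ?_
    have hcov : 0 ≤ p * q * ((A i - B i) * (∏ j ∈ s, A j - ∏ j ∈ s, B j)) :=
      mul_nonneg (mul_nonneg hp hq)
        (mul_nonneg (sub_nonneg.2 (hAB i)) (sub_nonneg.2 hprod))
    obtain rfl : q = 1 - p := by linarith
    linarith

/-- Version of `prod_mix_le_mix_prod` for factors that are comonotone in either direction. -/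
lemma prod_mix_le_mix_prod_of_or {ι : Type*} (s : Finset ι) {p : ℝ} (hp : 0 ≤ p) (hp1 : p ≤ 1)
    (A B : ι → ℝ) (hA : ∀ i, 0 ≤ A i) (hB : ∀ i, 0 ≤ B i)
    (hAB : (∀ i, B i ≤ A i) ∨ (∀ i, A i ≤ B i)) :
    ∏ i ∈ s, (p * A i + (1 - p) * B i) ≤ p * ∏ i ∈ s, A i + (1 - p) * ∏ i ∈ s, B i := by
  rcases hAB with h | h
  · exact prod_mix_le_mix_prod s hp (sub_nonneg.2 hp1) (by ring) A B hB h
  · have := prod_mix_le_mix_prod s (sub_nonneg.2 hp1) hp (by ring) B A hA h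
    simpa only [add_comm] using this

lemma blockWeight_nonneg {n : ℕ} {p : ℝ} (hp : 0 ≤ p ∧ p ≤ 1) (M S : Finset (Fin n)) :
    0 ≤ blockWeight p M S := by
  unfold blockWeight
  split_ifs
  · exact hp.1
  · linarith [hp.2]
  · exact le_rfl

lemma partMeasure_nonneg {n : ℕ} (pt : Finpartition (univ : Finset (Fin n))) {p : ℝ}
    (hp : 0 ≤ p ∧ p ≤ 1) (S : Finset (Fin n)) : 0 ≤ partMeasure pt p S :=
  prod_nonneg fun M _ => blockWeight_nonneg hp M S

/-- A block is contained in a union of blocks iff it is one of them. -/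
lemma subset_biUnion_parts_iff {n : ℕ} (pt : Finpartition (univ : Finset (Fin n)))
    {C : Finset (Finset (Fin n))} (hC : C ⊆ pt.parts) {M : Finset (Fin n)} (hM : M ∈ pt.parts) :
    M ⊆ C.biUnion id ↔ M ∈ C := by
  refine ⟨fun h => ?_, fun h => subset_biUnion_of_mem id h⟩
  obtain ⟨x, hx⟩ := pt.nonempty_of_mem_parts hM
  obtain ⟨N, hN, hxN⟩ := mem_biUnion.1 (h hx)
  rwa [pt.eq_of_mem_parts hM (hC hN) hx hxN]

/-- A block outside a family of blocks does not meet the union of that family. -/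
lemma inter_biUnion_parts_eq_empty {n : ℕ} (pt : Finpartition (univ : Finset (Fin n)))
    {C : Finset (Finset (Fin n))} (hC : C ⊆ pt.parts) {M : Finset (Fin n)} (hM : M ∈ pt.parts)
    (hMC : M ∉ C) : M ∩ C.biUnion id = ∅ := by
  rw [← disjoint_iff_inter_eq_empty, disjoint_left]
  intro x hx hxC
  obtain ⟨N, hN, hxN⟩ := mem_biUnion.1 hxC
  exact hMC (pt.eq_of_mem_parts hM (hC hN) hx hxN ▸ hN)

/-- The expectation of a product function under `partMeasure` factors over the blocks. -/
lemma sum_prod_mul_partMeasure {n : ℕ} (pt : Finpartition (univ : Finset (Fin n))) (p : ℝ)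
    (a b : Fin n → ℝ) :
    ∑ S : Finset (Fin n), (∏ l, if l ∈ S then a l else b l) * partMeasure pt p S =
      ∏ M ∈ pt.parts, (p * ∏ l ∈ M, a l + (1 - p) * ∏ l ∈ M, b l) := by
  have hsplit (S : Finset (Fin n)) :
      (∏ l, if l ∈ S then a l else b l) * partMeasure pt p S =
        ∏ M ∈ pt.parts, (∏ l ∈ M, if l ∈ S then a l else b l) * blockWeight p M S := by
    rw [prod_mul_distrib, partMeasure]
    congr 1
    conv_lhs => rw [← pt.biUnion_parts]
    exact prod_biUnion pt.disjoint
  simp only [hsplit]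
  rw [prod_add]
  symm
  refine sum_of_injOn (fun C => C.biUnion id) ?_ (fun _ _ => mem_coe.2 (mem_univ _)) ?_ ?_
  · intro C hC D hD hCD
    simp only [coe_powerset, Set.mem_preimage, Set.mem_powerset_iff, coe_subset] at hC hD
    ext M
    constructor <;> intro hM
    · rw [← subset_biUnion_parts_iff pt hD (hC hM)]
      exact (subset_biUnion_of_mem id hM).trans_eq hCD
    · rw [← subset_biUnion_parts_iff pt hC (hD hM)]
      exact (subset_biUnion_of_mem id hM).trans_eq hCD.symm
  · intro S _ hS
    by_contra hne
    rw [← ne_eq, prod_ne_zero_iff] at hne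
    refine hS ⟨pt.parts.filter (· ⊆ S), mem_coe.2 (mem_powerset.2 (filter_subset _ _)), ?_⟩
    ext x
    simp only [mem_biUnion, mem_filter, id]
    refine ⟨fun ⟨M, hM, hx⟩ => hM.2 hx, fun hx => ?_⟩
    obtain ⟨M, hM, hxM⟩ := pt.exists_mem (mem_univ x)
    refine ⟨M, ⟨hM, ?_⟩, hxM⟩
    by_contra hMS
    have hMS' : M ∩ S ≠ ∅ := nonempty_iff_ne_empty.1 ⟨x, mem_inter.2 ⟨hxM, hx⟩⟩
    exact hne M hM (by simp [blockWeight, hMS, hMS'])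
  · intro C hC
    rw [mem_powerset] at hC
    rw [← prod_sdiff hC, mul_comm]
    congr 1
    · refine prod_congr rfl fun M hM => ?_
      obtain ⟨hM, hMC⟩ := mem_sdiff.1 hM
      have hinter := inter_biUnion_parts_eq_empty pt hC hM hMC
      have hsub := (subset_biUnion_parts_iff pt hC hM).not.2 hMC
      rw [blockWeight, if_neg hsub, if_pos hinter, mul_comm]
      congr 1
      refine prod_congr rfl fun l hl => (if_neg fun hlC => ?_).symm
      exact disjoint_left.1 (disjoint_iff_inter_eq_empty.2 hinter) hl hlC
    · refine prod_congr rfl fun M hM => ?_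
      have hsub := (subset_biUnion_parts_iff pt hC (hC hM)).2 hM
      rw [blockWeight, if_pos hsub, mul_comm]
      congr 1
      exact prod_congr rfl fun l hl => (if_pos (hsub hl)).symm

/-- Coarsening a single partition increases the expectation of an aligned product. -/
lemma sum_prod_mul_partMeasure_le {n : ℕ} (pt pt' : Finpartition (univ : Finset (Fin n)))
    (hcoarser : ∀ M ∈ pt.parts, ∃ M' ∈ pt'.parts, M ⊆ M') {p : ℝ} (hp : 0 ≤ p ∧ p ≤ 1)
    (a b : Fin n → ℝ) (ha : ∀ l, 0 ≤ a l) (hb : ∀ l, 0 ≤ b l)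
    (hab : (∀ l, b l ≤ a l) ∨ (∀ l, a l ≤ b l)) :
    ∑ S : Finset (Fin n), (∏ l, if l ∈ S then a l else b l) * partMeasure pt p S ≤
      ∑ S : Finset (Fin n), (∏ l, if l ∈ S then a l else b l) * partMeasure pt' p S := by
  rw [sum_prod_mul_partMeasure, sum_prod_mul_partMeasure]
  have hparts : pt.parts = pt'.parts.biUnion fun M' => pt.parts.filter (· ⊆ M') := by
    ext M
    simp only [mem_biUnion, mem_filter]
    exact ⟨fun hM => (hcoarser M hM).imp fun M' h => ⟨h.1, hM, h.2⟩, fun ⟨_, _, hM, _⟩ => hM⟩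
  have hdisj : (pt'.parts : Set (Finset (Fin n))).PairwiseDisjoint
      fun M' => pt.parts.filter (· ⊆ M') := by
    intro M' hM' N' hN' hne
    refine disjoint_left.2 fun M hM hN => hne ?_
    rw [mem_filter] at hM hN
    obtain ⟨x, hx⟩ := pt.nonempty_of_mem_parts hM.1
    exact pt'.eq_of_mem_parts hM' hN' (hM.2 hx) (hN.2 hx)
  have hunion (M') (hM' : M' ∈ pt'.parts) : (pt.parts.filter (· ⊆ M')).biUnion id = M' := by
    ext x
    simp only [mem_biUnion, mem_filter, id]
    refine ⟨fun ⟨M, hM, hx⟩ => hM.2 hx, fun hx => ?_⟩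
    obtain ⟨M, hM, hxM⟩ := pt.exists_mem (mem_univ x)
    obtain ⟨N', hN', hMN⟩ := hcoarser M hM
    exact ⟨M, ⟨hM, pt'.eq_of_mem_parts hN' hM' (hMN hxM) hx ▸ hMN⟩, hxM⟩
  have hprod (M') (hM' : M' ∈ pt'.parts) (c : Fin n → ℝ) :
      ∏ M ∈ pt.parts with M ⊆ M', ∏ l ∈ M, c l = ∏ l ∈ M', c l := by
    conv_rhs => rw [← hunion M' hM']
    exact (prod_biUnion (pt.disjoint.subset (coe_subset.2 (filter_subset _ _)))).symm
  have hmix (M : Finset (Fin n)) : 0 ≤ p * ∏ l ∈ M, a l + (1 - p) * ∏ l ∈ M, b l :=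
    add_nonneg (mul_nonneg hp.1 (prod_nonneg fun l _ => ha l))
      (mul_nonneg (sub_nonneg.2 hp.2) (prod_nonneg fun l _ => hb l))
  rw [hparts, prod_biUnion hdisj]
  refine prod_le_prod (fun M' _ => prod_nonneg fun M _ => hmix M) fun M' hM' => ?_
  rw [← hprod M' hM' a, ← hprod M' hM' b]
  refine prod_mix_le_mix_prod_of_or _ hp.1 hp.2 (fun M => ∏ l ∈ M, a l) (fun M => ∏ l ∈ M, b l)
    (fun M => prod_nonneg fun l _ => ha l) (fun M => prod_nonneg fun l _ => hb l) ?_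
  exact hab.imp (fun h M => prod_le_prod (fun l _ => hb l) fun l _ => h l)
    fun h M => prod_le_prod (fun l _ => ha l) fun l _ => h l

/-- If replacing the weight of any single coordinate increases every conditional sum, then
replacing all the weights increases the total sum. -/
lemma sum_mul_prod_le_of_coordinatewise {ι α : Type*} [Fintype ι] [DecidableEq ι] [Fintype α]
    (Φ : (ι → α) → ℝ) (w w' : ι → α → ℝ) (hw : ∀ i x, 0 ≤ w i x) (hw' : ∀ i x, 0 ≤ w' i x)
    (hstep : ∀ i t, ∑ x, Φ (Function.update t i x) * w i x ≤
      ∑ x, Φ (Function.update t i x) * w' i x) :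
    ∑ t, Φ t * ∏ i, w i (t i) ≤ ∑ t, Φ t * ∏ i, w' i (t i) := by
  suffices h : ∀ s : Finset ι, ∑ t, Φ t * ∏ i, w i (t i) ≤
      ∑ t, Φ t * ∏ i, (if i ∈ s then w' i (t i) else w i (t i)) by simpa using h univ
  intro s
  induction s using Finset.induction_on with
  | empty => simp
  | insert j s hj ih =>
    refine ih.trans ?_
    have hsum (K : (ι → α) → ℝ) :
        ∑ t, K t = ∑ r : {i // i ≠ j} → α, ∑ x, K ((Equiv.funSplitAt j α).symm (x, r)) := by
      rw [← (Equiv.funSplitAt j α).symm.sum_comp, Fintype.sum_prod_type_right]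
    rw [hsum, hsum]
    refine sum_le_sum fun r _ => ?_
    rcases isEmpty_or_nonempty α with hα | ⟨⟨x₀⟩⟩
    · simp
    set t₀ : ι → α := (Equiv.funSplitAt j α).symm (x₀, r)
    have hupdate (x : α) : (Equiv.funSplitAt j α).symm (x, r) = Function.update t₀ j x := by
      ext i
      by_cases hi : i = j
      · subst hi; simp [Equiv.funSplitAt]
      · simp [t₀, Equiv.funSplitAt, hi]
    set c : ℝ := ∏ i ∈ univ.erase j, if i ∈ s then w' i (t₀ i) else w i (t₀ i)
    have hc : 0 ≤ c := prod_nonneg fun i _ => by split_ifs <;> simp [hw, hw']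
    have hold (x : α) : ∏ i, (if i ∈ s then w' i (Function.update t₀ j x i)
        else w i (Function.update t₀ j x i)) = w j x * c := by
      rw [← mul_prod_erase univ _ (mem_univ j)]
      simp only [hj, if_false, Function.update_self]
      congr 1
      refine prod_congr rfl fun i hi => ?_
      rw [Function.update_of_ne (ne_of_mem_erase hi)]
    have hnew (x : α) : ∏ i, (if i ∈ insert j s then w' i (Function.update t₀ j x i)
        else w i (Function.update t₀ j x i)) = w' j x * c := by
      rw [← mul_prod_erase univ _ (mem_univ j)]
      simp only [mem_insert_self, if_true, Function.update_self]
      congr 1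
      refine prod_congr rfl fun i hi => ?_
      have hij := ne_of_mem_erase hi
      simp [hij]
    simp only [hupdate, hold, hnew, ← mul_assoc, ← sum_mul]
    exact mul_le_mul_of_nonneg_right (hstep j t₀) hc

/-- Subsets of `H × L` correspond to families of rows. -/
def rowsEquiv (m n : ℕ) : Finset (Fin m × Fin n) ≃ (Fin m → Finset (Fin n)) where
  toFun T h := Lh h T
  invFun t := univ.filter fun x => x.2 ∈ t x.1
  left_inv T := by ext; simp [Lh]
  right_inv t := by ext; simp [Lh]

lemma schedExp_eq_sum_rows {m n : ℕ} (Sch : Fin m → Finpartition (univ : Finset (Fin n)))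
    (p : Fin m → ℝ) (F : Fin n → Finset (Fin m) → ℝ) :
    schedExp Sch p F = ∑ t : Fin m → Finset (Fin n),
      (∏ l, F l (univ.filter fun h => l ∈ t h)) * ∏ h, partMeasure (Sch h) (p h) (t h) := by
  rw [← (rowsEquiv m n).sum_comp]
  simp [schedExp, schedMeasure, rowsEquiv, Hl, Lh]

/-- Theorem D: a coarser staggered schedule increases the expectation of an
aligned tuple of nonnegative functions. -/
theorem coarser_schedule_le {m n : ℕ}
    (Sch Sch' : Fin m → Finpartition (univ : Finset (Fin n)))
    (p : Fin m → ℝ) (hp : ∀ h, 0 ≤ p h ∧ p h ≤ 1)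
    (F : Fin n → Finset (Fin m) → ℝ)
    (hFnonneg : ∀ l S, 0 ≤ F l S) (hFaligned : Aligned F)
    (hcoarser : Coarser Sch' Sch) :
    schedExp Sch p F ≤ schedExp Sch' p F := by
  rw [schedExp_eq_sum_rows, schedExp_eq_sum_rows]
  refine sum_mul_prod_le_of_coordinatewise _ (fun h => partMeasure (Sch h) (p h))
    (fun h => partMeasure (Sch' h) (p h)) (fun h => partMeasure_nonneg _ (hp h))
    (fun h => partMeasure_nonneg _ (hp h)) fun h t => ?_
  set R : Fin n → Finset (Fin m) := fun l => univ.filter fun k => k ≠ h ∧ l ∈ t k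
  have hrow (l : Fin n) (S : Finset (Fin n)) :
      F l (univ.filter fun k => l ∈ Function.update t h S k) =
        if l ∈ S then F l (insert h (R l)) else F l (R l) := by
    split_ifs with hl <;> congr 1 <;> ext k <;> by_cases hk : k = h
    · subst hk; simp [hl]
    · simp [R, hk]
    · subst hk; simp [R, hl]
    · simp [R, hk]
  simp only [hrow]
  exact sum_prod_mul_partMeasure_le _ _ (hcoarser h) (hp h) (fun l => F l (insert h (R l)))
    (fun l => F l (R l)) (fun l => hFnonneg l _) (fun l => hFnonneg l _)
    ((hFaligned h).imp (fun H l => H l _) fun H l => H l _)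
end

section
/- Let H = {1,…,m} and L = {1,…,n} be finite sets, let p = (p₁,…,p_m) ∈ [0,1]^m, and let F = (f₁,…,f_n) be an aligned tuple of nonnegative real-valued functions on the power set of H. Let Π = (π₁,…,π_m) and Π′ = (π′₁,…,π′_m) be tuples of partitions of L such that π′_h = π_h for all h ≠ 1 and π′₁ is obtained from π₁ by replacing two of its blocks M₁, M₂ by their union M₁ ∪ M₂ (all other blocks unchanged). Then E(Π′,p,F) ≥ E(Π,p,F). -/
open Finset

/-- A sum over all finsets is nonnegative if the summand is supported on the sets which contain
each of the disjoint nonempty sets `U`, `V` either completely or not at all, and if grouping the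
sets according to their trace outside `U ∪ V` gives nonnegative partial sums. -/
lemma sum_nonneg_of_four_point {α : Type*} [Fintype α] [DecidableEq α] (g : Finset α → ℝ)
    {U V : Finset α} (hU : U.Nonempty) (hV : V.Nonempty) (hUV : Disjoint U V)
    (hsupp : ∀ T, g T ≠ 0 → (U ⊆ T ∨ Disjoint U T) ∧ (V ⊆ T ∨ Disjoint V T))
    (hfour : ∀ A, Disjoint A (U ∪ V) → 0 ≤ g A + g (A ∪ (U ∪ V)) + g (A ∪ U) + g (A ∪ V)) :
    0 ≤ ∑ T, g T := by
  rw [← Finset.sum_fiberwise univ (fun T => T \ (U ∪ V)) g]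
  refine Finset.sum_nonneg fun A _ => ?_
  by_cases hA : Disjoint A (U ∪ V)
  · obtain ⟨u, hu⟩ := hU
    obtain ⟨v, hv⟩ := hV
    have huV : u ∉ V := Finset.disjoint_left.1 hUV hu
    have hvU : v ∉ U := Finset.disjoint_right.1 hUV hv
    have huA : u ∉ A := fun h => Finset.disjoint_left.1 hA h (mem_union_left _ hu)
    have hvA : v ∉ A := fun h => Finset.disjoint_left.1 hA h (mem_union_right _ hv)
    have hsub : ({A, A ∪ (U ∪ V), A ∪ U, A ∪ V} : Finset (Finset α)) ⊆
        univ.filter fun T => T \ (U ∪ V) = A := by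
      have hA' := Finset.disjoint_left.1 hA
      intro T hT
      simp only [mem_insert, mem_singleton] at hT
      simp only [mem_filter, mem_univ, true_and]
      ext x
      have := @hA' x
      rcases hT with rfl | rfl | rfl | rfl <;> simp only [mem_sdiff, mem_union] at * <;> tauto
    rw [← Finset.sum_subset hsub]
    · have h₁ : A ∉ ({A ∪ (U ∪ V), A ∪ U, A ∪ V} : Finset (Finset α)) := by
        simp only [mem_insert, mem_singleton, not_or]
        refine ⟨fun h => huA ?_, fun h => huA ?_, fun h => hvA ?_⟩ <;> rw [h] <;> simp [hu, hv]
      have h₂ : A ∪ (U ∪ V) ∉ ({A ∪ U, A ∪ V} : Finset (Finset α)) := by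
        simp only [mem_insert, mem_singleton, not_or]
        refine ⟨fun h => ?_, fun h => ?_⟩
        · have := (Finset.ext_iff.1 h v).1 (by simp [hv])
          simp [hvA, hvU] at this
        · have := (Finset.ext_iff.1 h u).1 (by simp [hu])
          simp [huA, huV] at this
      have h₃ : A ∪ U ∉ ({A ∪ V} : Finset (Finset α)) := by
        simp only [mem_singleton]
        intro h
        have := (Finset.ext_iff.1 h u).1 (by simp [hu])
        simp [huA, huV] at this
      rw [sum_insert h₁, sum_insert h₂, sum_insert h₃, sum_singleton]
      linarith [hfour A hA]
    · intro T hT hT'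
      by_contra hg
      apply hT'
      simp only [mem_filter, mem_univ, true_and] at hT
      simp only [mem_insert, mem_singleton]
      subst hT
      obtain ⟨h₁, h₂⟩ := hsupp T hg
      simp only [Finset.disjoint_left, Finset.subset_iff] at h₁ h₂
      rcases h₁ with h₁ | h₁ <;> rcases h₂ with h₂ | h₂
      · right; left
        ext x; have := @h₁ x; have := @h₂ x
        simp only [mem_union, mem_sdiff]; tauto
      · right; right; left
        ext x; have := @h₁ x; have := @h₂ x
        simp only [mem_union, mem_sdiff]; tauto
      · right; right; right
        ext x; have := @h₁ x; have := @h₂ x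
        simp only [mem_union, mem_sdiff]; tauto
      · left
        ext x; have := @h₁ x; have := @h₂ x
        simp only [mem_union, mem_sdiff]; tauto
  · rw [Finset.sum_eq_zero]
    intro T hT
    refine absurd ?_ hA
    rw [← (mem_filter.1 hT).2]
    exact sdiff_disjoint

lemma blockWeight_of_subset {n : ℕ} (p : ℝ) {M S : Finset (Fin n)} (h : M ⊆ S) :
    blockWeight p M S = p :=
  if_pos h

lemma blockWeight_of_disjoint {n : ℕ} (p : ℝ) {M S : Finset (Fin n)} (hM : M.Nonempty)
    (h : Disjoint M S) : blockWeight p M S = 1 - p := by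
  have hS : ¬ M ⊆ S := fun hs => hM.ne_empty (disjoint_self.1 (h.mono_right hs))
  rw [blockWeight, if_neg hS, if_pos (disjoint_iff_inter_eq_empty.1 h)]

lemma subset_or_disjoint_of_blockWeight_ne_zero {n : ℕ} {p : ℝ} {M S : Finset (Fin n)}
    (h : blockWeight p M S ≠ 0) : M ⊆ S ∨ Disjoint M S := by
  unfold blockWeight at h
  split_ifs at h with h₁ h₂
  · exact Or.inl h₁
  · exact Or.inr (disjoint_iff_inter_eq_empty.2 h₂)
  · exact absurd rfl h

lemma blockWeight_union_right {n : ℕ} (p : ℝ) {M N : Finset (Fin n)} (S : Finset (Fin n))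
    (h : Disjoint M N) : blockWeight p M (S ∪ N) = blockWeight p M S := by
  have h₁ : M ⊆ S ∪ N ↔ M ⊆ S :=
    ⟨fun hs => h.left_le_of_le_sup_right hs, fun hs => hs.trans subset_union_left⟩
  have h₂ : M ∩ (S ∪ N) = M ∩ S := by
    rw [inter_union_distrib_left, disjoint_iff_inter_eq_empty.1 h, union_empty]
  simp only [blockWeight, h₁, h₂]

lemma Lh_union_row {m n : ℕ} (z : Fin m) (A : Finset (Fin m × Fin n)) (N : Finset (Fin n)) :
    Lh z (A ∪ {z} ×ˢ N) = Lh z A ∪ N := by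
  ext l; simp [Lh]

lemma Lh_union_row_of_ne {m n : ℕ} {z h : Fin m} (hz : h ≠ z) (A : Finset (Fin m × Fin n))
    (N : Finset (Fin n)) : Lh h (A ∪ {z} ×ˢ N) = Lh h A := by
  ext l; simp [Lh, hz.symm]

lemma Hl_union_row {m n : ℕ} (z : Fin m) (l : Fin n) (A : Finset (Fin m × Fin n))
    (N : Finset (Fin n)) :
    Hl l (A ∪ {z} ×ˢ N) = if l ∈ N then insert z (Hl l A) else Hl l A := by
  split_ifs with hl <;> ext h <;> simp [Hl, hl, or_comm, eq_comm]

lemma row_subset_or_disjoint {m n : ℕ} {z : Fin m} {T : Finset (Fin m × Fin n)}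
    {M : Finset (Fin n)} (h : M ⊆ Lh z T ∨ Disjoint M (Lh z T)) :
    {z} ×ˢ M ⊆ T ∨ Disjoint ({z} ×ˢ M) T := by
  refine h.imp (fun h => ?_) fun h => ?_
  · rintro ⟨a, l⟩ hx
    simp only [mem_product, mem_singleton] at hx
    obtain ⟨rfl, hl⟩ := hx
    simpa [Lh] using h hl
  · rw [Finset.disjoint_left]
    rintro ⟨a, l⟩ hx hT
    simp only [mem_product, mem_singleton] at hx
    obtain ⟨rfl, hl⟩ := hx
    exact Finset.disjoint_left.1 h hl (by simpa [Lh] using hT)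

lemma prod_univ_eq_three {ι : Type*} [Fintype ι] [DecidableEq ι] {M₁ M₂ : Finset ι}
    (h : Disjoint M₁ M₂) (f : ι → ℝ) :
    ∏ l, f l = (∏ l ∈ M₁, f l) * (∏ l ∈ M₂, f l) * ∏ l ∈ (M₁ ∪ M₂)ᶜ, f l := by
  rw [← prod_union h, prod_mul_prod_compl]

/-- Turning a fixed element on or off on two disjoint sets of coordinates has increments of the
same sign for an aligned tuple. -/
lemma four_point_prod {m n : ℕ} {F : Fin n → Finset (Fin m) → ℝ}
    (hF : ∀ l S, 0 ≤ F l S) (hal : Aligned F) (z : Fin m) {M₁ M₂ : Finset (Fin n)}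
    (hM : Disjoint M₁ M₂) (A : Finset (Fin m × Fin n)) :
    0 ≤ ∏ l, F l (Hl l A) + ∏ l, F l (Hl l (A ∪ {z} ×ˢ (M₁ ∪ M₂)))
      - ∏ l, F l (Hl l (A ∪ {z} ×ˢ M₁)) - ∏ l, F l (Hl l (A ∪ {z} ×ˢ M₂)) := by
  have hon : ∀ {N M : Finset (Fin n)}, M ⊆ N →
      ∏ l ∈ M, F l (Hl l (A ∪ {z} ×ˢ N)) = ∏ l ∈ M, F l (insert z (Hl l A)) := fun h =>
    prod_congr rfl fun l hl => by rw [Hl_union_row, if_pos (h hl)]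
  have hoff : ∀ {N M : Finset (Fin n)}, Disjoint M N →
      ∏ l ∈ M, F l (Hl l (A ∪ {z} ×ˢ N)) = ∏ l ∈ M, F l (Hl l A) := fun h =>
    prod_congr rfl fun l hl => by rw [Hl_union_row, if_neg (Finset.disjoint_left.1 h hl)]
  have hc : Disjoint (M₁ ∪ M₂)ᶜ (M₁ ∪ M₂) := disjoint_compl_left
  simp only [prod_univ_eq_three hM]
  rw [hon (subset_union_left : M₁ ⊆ M₁ ∪ M₂), hon (subset_union_right : M₂ ⊆ M₁ ∪ M₂), hoff hc,
    hon (Subset.refl M₁), hoff hM.symm, hoff (hc.mono_right subset_union_left),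
    hoff hM, hon (Subset.refl M₂), hoff (hc.mono_right subset_union_right)]
  set R := ∏ l ∈ (M₁ ∪ M₂)ᶜ, F l (Hl l A)
  have hR : 0 ≤ R := prod_nonneg fun _ _ => hF _ _
  have key : 0 ≤ (∏ l ∈ M₁, F l (insert z (Hl l A)) - ∏ l ∈ M₁, F l (Hl l A)) *
      (∏ l ∈ M₂, F l (insert z (Hl l A)) - ∏ l ∈ M₂, F l (Hl l A)) := by
    rcases hal z with h | h
    · exact mul_nonneg
        (sub_nonneg.2 (prod_le_prod (fun _ _ => hF _ _) fun l _ => h l _))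
        (sub_nonneg.2 (prod_le_prod (fun _ _ => hF _ _) fun l _ => h l _))
    · exact mul_nonneg_of_nonpos_of_nonpos
        (sub_nonpos.2 (prod_le_prod (fun _ _ => hF _ _) fun l _ => h l _))
        (sub_nonpos.2 (prod_le_prod (fun _ _ => hF _ _) fun l _ => h l _))
  linarith [mul_nonneg key hR]

/-- The part of the schedule measure that does not involve the blocks `M₁`, `M₂` of `z`. -/
def restMeasure {m n : ℕ} (Sch : Fin m → Finpartition (univ : Finset (Fin n)))
    (p : Fin m → ℝ) (z : Fin m) (M₁ M₂ : Finset (Fin n)) (T : Finset (Fin m × Fin n)) : ℝ :=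
  (∏ h ∈ univ.erase z, partMeasure (Sch h) (p h) (Lh h T)) *
    ∏ M ∈ (Sch z).parts \ {M₁, M₂}, blockWeight (p z) M (Lh z T)

lemma restMeasure_nonneg {m n : ℕ} (Sch : Fin m → Finpartition (univ : Finset (Fin n)))
    {p : Fin m → ℝ} (hp : ∀ h, 0 ≤ p h ∧ p h ≤ 1) (z : Fin m) (M₁ M₂ : Finset (Fin n))
    (T : Finset (Fin m × Fin n)) : 0 ≤ restMeasure Sch p z M₁ M₂ T :=
  mul_nonneg (prod_nonneg fun _ _ => partMeasure_nonneg _ (hp _) _)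
    (prod_nonneg fun _ _ => blockWeight_nonneg (hp _) _ _)

lemma restMeasure_union_row {m n : ℕ} (Sch : Fin m → Finpartition (univ : Finset (Fin n)))
    (p : Fin m → ℝ) {z : Fin m} {M₁ M₂ N : Finset (Fin n)}
    (hM₁ : M₁ ∈ (Sch z).parts) (hM₂ : M₂ ∈ (Sch z).parts) (hN : N ⊆ M₁ ∪ M₂)
    (A : Finset (Fin m × Fin n)) :
    restMeasure Sch p z M₁ M₂ (A ∪ {z} ×ˢ N) = restMeasure Sch p z M₁ M₂ A := by
  unfold restMeasure
  congr 1
  · exact prod_congr rfl fun h hh => by rw [Lh_union_row_of_ne (ne_of_mem_erase hh)]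
  · refine prod_congr rfl fun M hM => ?_
    simp only [mem_sdiff, mem_insert, mem_singleton, not_or] at hM
    rw [Lh_union_row, blockWeight_union_right]
    refine Disjoint.mono_right hN (disjoint_union_right.2 ⟨?_, ?_⟩)
    · exact (Sch z).disjoint hM.1 hM₁ hM.2.1
    · exact (Sch z).disjoint hM.1 hM₂ hM.2.2

lemma schedMeasure_eq_rest_mul {m n : ℕ} (Sch : Fin m → Finpartition (univ : Finset (Fin n)))
    (p : Fin m → ℝ) {z : Fin m} {M₁ M₂ : Finset (Fin n)}
    (hM₁ : M₁ ∈ (Sch z).parts) (hM₂ : M₂ ∈ (Sch z).parts) (hne : M₁ ≠ M₂)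
    (T : Finset (Fin m × Fin n)) :
    schedMeasure Sch p T = restMeasure Sch p z M₁ M₂ T *
      (blockWeight (p z) M₁ (Lh z T) * blockWeight (p z) M₂ (Lh z T)) := by
  have hsub : ({M₁, M₂} : Finset (Finset (Fin n))) ⊆ (Sch z).parts := by
    simp [insert_subset_iff, hM₁, hM₂]
  rw [schedMeasure, ← prod_erase_mul _ _ (mem_univ z), restMeasure, mul_assoc]
  congr 1
  rw [partMeasure, ← prod_sdiff hsub, prod_pair hne]

lemma schedMeasure_merge_eq_rest_mul {m n : ℕ}
    {Sch Sch' : Fin m → Finpartition (univ : Finset (Fin n))}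
    (p : Fin m → ℝ) {z : Fin m} {M₁ M₂ : Finset (Fin n)}
    (hM₁ : M₁ ∈ (Sch z).parts)
    (hother : ∀ h, h ≠ z → Sch' h = Sch h)
    (hmerge : (Sch' z).parts = insert (M₁ ∪ M₂) ((Sch z).parts \ {M₁, M₂}))
    (T : Finset (Fin m × Fin n)) :
    schedMeasure Sch' p T = restMeasure Sch p z M₁ M₂ T *
      blockWeight (p z) (M₁ ∪ M₂) (Lh z T) := by
  have hnot : M₁ ∪ M₂ ∉ (Sch z).parts \ {M₁, M₂} := by
    intro h
    simp only [mem_sdiff, mem_insert, mem_singleton, not_or] at h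
    have hd : Disjoint (M₁ ∪ M₂) M₁ := (Sch z).disjoint h.1 hM₁ h.2.1
    exact ((Sch z).nonempty_of_mem_parts hM₁).ne_empty
      (disjoint_self.1 (hd.mono_left subset_union_left))
  rw [schedMeasure, ← prod_erase_mul _ _ (mem_univ z), restMeasure, mul_assoc]
  congr 1
  · exact prod_congr rfl fun h hh => by rw [hother h (ne_of_mem_erase hh)]
  · rw [partMeasure, hmerge, prod_insert hnot, mul_comm]

/-- Merging two blocks of the partition of a single voter `h = 1` (the first voter)
increases the expectation of an aligned tuple of nonnegative functions. -/
theorem merge_two_blocks_le {m n : ℕ} (hm : 0 < m)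
    (Sch Sch' : Fin m → Finpartition (univ : Finset (Fin n)))
    (p : Fin m → ℝ) (hp : ∀ h, 0 ≤ p h ∧ p h ≤ 1)
    (F : Fin n → Finset (Fin m) → ℝ)
    (hFnonneg : ∀ l S, 0 ≤ F l S) (hFaligned : Aligned F)
    (M₁ M₂ : Finset (Fin n))
    (hM₁ : M₁ ∈ (Sch ⟨0, hm⟩).parts) (hM₂ : M₂ ∈ (Sch ⟨0, hm⟩).parts)
    (hM₁₂ : M₁ ≠ M₂)
    (hother : ∀ h : Fin m, h ≠ ⟨0, hm⟩ → Sch' h = Sch h)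
    (hmerge : (Sch' ⟨0, hm⟩).parts = insert (M₁ ∪ M₂) ((Sch ⟨0, hm⟩).parts \ {M₁, M₂})) :
    schedExp Sch p F ≤ schedExp Sch' p F := by
  generalize (⟨0, hm⟩ : Fin m) = z at *
  have hn₁ : M₁.Nonempty := (Sch z).nonempty_of_mem_parts hM₁
  have hn₂ : M₂.Nonempty := (Sch z).nonempty_of_mem_parts hM₂
  have hd : Disjoint M₁ M₂ := (Sch z).disjoint hM₁ hM₂ hM₁₂
  rw [← sub_nonneg, schedExp, schedExp, ← sum_sub_distrib]
  simp only [schedMeasure_eq_rest_mul Sch p hM₁ hM₂ hM₁₂,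
    schedMeasure_merge_eq_rest_mul p hM₁ hother hmerge]
  refine sum_nonneg_of_four_point _ (U := {z} ×ˢ M₁) (V := {z} ×ˢ M₂)
    ((singleton_nonempty z).product hn₁) ((singleton_nonempty z).product hn₂)
    (disjoint_product.2 (Or.inr hd)) (fun T hT => ?_) fun A hA => ?_
  · have hblocks : (M₁ ⊆ Lh z T ∨ Disjoint M₁ (Lh z T)) ∧
        (M₂ ⊆ Lh z T ∨ Disjoint M₂ (Lh z T)) := by
      by_cases h : blockWeight (p z) (M₁ ∪ M₂) (Lh z T) = 0
      · have h' : blockWeight (p z) M₁ (Lh z T) * blockWeight (p z) M₂ (Lh z T) ≠ 0 := by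
          intro h'
          simp [h, h'] at hT
        exact ⟨subset_or_disjoint_of_blockWeight_ne_zero (left_ne_zero_of_mul h'),
          subset_or_disjoint_of_blockWeight_ne_zero (right_ne_zero_of_mul h')⟩
      · rcases subset_or_disjoint_of_blockWeight_ne_zero h with h | h
        · exact ⟨Or.inl (subset_union_left.trans h), Or.inl (subset_union_right.trans h)⟩
        · rw [disjoint_union_left] at h
          exact ⟨Or.inr h.1, Or.inr h.2⟩
    exact ⟨row_subset_or_disjoint hblocks.1, row_subset_or_disjoint hblocks.2⟩
  · rw [← product_union] at hA ⊢
    have hS : Disjoint (M₁ ∪ M₂) (Lh z A) := by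
      rw [Finset.disjoint_right]
      intro l hl hl'
      exact Finset.disjoint_left.1 hA (by simpa [Lh] using hl) (by simpa using hl')
    obtain ⟨hS₁, hS₂⟩ := disjoint_union_left.1 hS
    rw [restMeasure_union_row Sch p hM₁ hM₂ (Subset.refl _),
      restMeasure_union_row Sch p hM₁ hM₂ subset_union_left,
      restMeasure_union_row Sch p hM₁ hM₂ subset_union_right]
    simp only [Lh_union_row]
    have hn : (M₁ ∪ M₂).Nonempty := hn₁.mono subset_union_left
    have hmixed₁ : blockWeight (p z) (M₁ ∪ M₂) (Lh z A ∪ M₁) = 0 := by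
      by_contra h
      rcases subset_or_disjoint_of_blockWeight_ne_zero h with h | h
      · exact hn₂.ne_empty (disjoint_self.1
          ((disjoint_union_right.2 ⟨hS₂, hd.symm⟩).mono_right (subset_union_right.trans h)))
      · exact hn₁.ne_empty (disjoint_self.1 (h.mono subset_union_left subset_union_right))
    have hmixed₂ : blockWeight (p z) (M₁ ∪ M₂) (Lh z A ∪ M₂) = 0 := by
      by_contra h
      rcases subset_or_disjoint_of_blockWeight_ne_zero h with h | h
      · exact hn₁.ne_empty (disjoint_self.1
          ((disjoint_union_right.2 ⟨hS₁, hd⟩).mono_right (subset_union_left.trans h)))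
      · exact hn₂.ne_empty (disjoint_self.1 (h.mono subset_union_right subset_union_right))
    rw [hmixed₁, hmixed₂, blockWeight_of_disjoint _ hn hS, blockWeight_of_disjoint _ hn₁ hS₁,
      blockWeight_of_disjoint _ hn₂ hS₂, blockWeight_of_subset _ subset_union_right,
      blockWeight_of_subset _ (subset_union_left.trans subset_union_right),
      blockWeight_of_subset _ (subset_union_right.trans subset_union_right),
      blockWeight_of_subset _ (subset_union_right : M₁ ⊆ Lh z A ∪ M₁),
      blockWeight_of_subset _ (subset_union_right : M₂ ⊆ Lh z A ∪ M₂),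
      blockWeight_union_right _ _ hd, blockWeight_union_right _ _ hd.symm,
      blockWeight_of_disjoint _ hn₁ hS₁, blockWeight_of_disjoint _ hn₂ hS₂]
    have hfour := four_point_prod hFnonneg hFaligned z hd A
    have hW := restMeasure_nonneg Sch hp z M₁ M₂ A
    have hpq : 0 ≤ p z * (1 - p z) := mul_nonneg (hp z).1 (sub_nonneg.2 (hp z).2)
    linarith [mul_nonneg (mul_nonneg hW hpq) hfour]
end

section
/- Let H = {1,…,m} be a finite set, let p = (p₁,…,p_m) ∈ [0,1]^m, and let F = (f₁,…,f_n) be an aligned tuple of nonnegative real-valued functions on the power set of H. Then E(f₁·f₂⋯f_n, μ_p) ≥ E(f₁, μ_p)·E(f₂, μ_p)⋯E(f_n, μ_p), where μ_p is the product Bernoulli measure on subsets of H. -/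
open Finset

lemma bern_eq_prod_ite {m : ℕ} (p : Fin m → ℝ) (S : Finset (Fin m)) :
    bern p S = ∏ h, if h ∈ S then p h else 1 - p h := by
  rw [bern, ← prod_mul_prod_compl S]
  congr 1
  · exact prod_congr rfl fun h hh => by simp [hh]
  · exact prod_congr rfl fun h hh => by simp [mem_compl.1 hh]

lemma bern_nonneg {m : ℕ} {p : Fin m → ℝ} (hp : ∀ h, 0 ≤ p h ∧ p h ≤ 1)
    (S : Finset (Fin m)) : 0 ≤ bern p S :=
  mul_nonneg (prod_nonneg fun h _ => (hp h).1) (prod_nonneg fun h _ => sub_nonneg.2 (hp h).2)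

lemma sum_bern {m : ℕ} (p : Fin m → ℝ) : ∑ S, bern p S = 1 := by
  have := prod_add p (fun h => 1 - p h) univ
  simpa [bern, compl_eq_univ_sdiff] using this.symm

lemma bern_symmDiff_mul {m : ℕ} (p : Fin m → ℝ) (D S T : Finset (Fin m)) :
    bern p (symmDiff S D) * bern p (symmDiff T D) =
      bern p (symmDiff (S ⊓ T) D) * bern p (symmDiff (S ⊔ T) D) := by
  simp only [bern_eq_prod_ite, ← prod_mul_distrib]
  refine prod_congr rfl fun h _ => ?_
  by_cases hS : h ∈ S <;> by_cases hT : h ∈ T <;> by_cases hD : h ∈ D <;>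
    simp [mem_symmDiff, hS, hT, hD, mul_comm]

lemma sum_comp_symmDiff {m : ℕ} (D : Finset (Fin m)) (g : Finset (Fin m) → ℝ) :
    ∑ S, g (symmDiff S D) = ∑ S, g S :=
  (symmDiff_left_involutive D).bijective.sum_comp g

/-- Reflecting the coordinates in `D` makes a function that is decreasing on `D` and increasing
off `D` monotone. -/
lemma monotone_comp_symmDiff {m : ℕ} {f : Finset (Fin m) → ℝ} {D : Finset (Fin m)}
    (hdec : ∀ h ∈ D, DecreasingAt f h) (hinc : ∀ h ∉ D, IncreasingAt f h) :
    Monotone fun S => f (symmDiff S D) := by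
  refine monotone_iff_forall_le_insert.2 fun S h hS => ?_
  by_cases hD : h ∈ D
  · have key : symmDiff S D = insert h (symmDiff (insert h S) D) := by
      ext x
      by_cases hx : x = h <;> simp [mem_symmDiff, hx, hS, hD]
    simpa only [key] using hdec h hD (symmDiff (insert h S) D)
  · have key : symmDiff (insert h S) D = insert h (symmDiff S D) := by
      ext x
      by_cases hx : x = h <;> simp [mem_symmDiff, hx, hD]
    simpa only [key] using hinc h hD (symmDiff S D)

/-- The Harris inequality for two functions that are monotone after reflecting the coordinates
in `D`. -/
lemma bernExp_mul_bernExp_le {m : ℕ} {p : Fin m → ℝ} (hp : ∀ h, 0 ≤ p h ∧ p h ≤ 1)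
    {D : Finset (Fin m)} {f g : Finset (Fin m) → ℝ} (hf₀ : 0 ≤ f) (hg₀ : 0 ≤ g)
    (hf : Monotone fun S => f (symmDiff S D)) (hg : Monotone fun S => g (symmDiff S D)) :
    bernExp p f * bernExp p g ≤ bernExp p (fun S => f S * g S) := by
  have key := fkg (fun S => f (symmDiff S D)) (fun S => g (symmDiff S D))
    (fun S => bern p (symmDiff S D)) (fun S => bern_nonneg hp _) (fun S => hf₀ (symmDiff S D))
    (fun S => hg₀ (symmDiff S D)) hf hg fun S T => (bern_symmDiff_mul p D S T).le
  rw [sum_comp_symmDiff D fun S => bern p S * f S, sum_comp_symmDiff D fun S => bern p S * g S,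
    sum_comp_symmDiff D (bern p), sum_comp_symmDiff D fun S => bern p S * (f S * g S),
    sum_bern, one_mul] at key
  simpa only [bernExp, mul_comm (bern p _)] using key

lemma bernExp_nonneg {m : ℕ} {p : Fin m → ℝ} (hp : ∀ h, 0 ≤ p h ∧ p h ≤ 1)
    {f : Finset (Fin m) → ℝ} (hf : 0 ≤ f) : 0 ≤ bernExp p f :=
  sum_nonneg fun S _ => mul_nonneg (hf S) (bern_nonneg hp S)

/-- The `n`-function generalization of the Harris inequality: for an aligned tuple of
nonnegative functions, the expectation of the product dominates the product of the
expectations. -/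
theorem harris_aligned_tuple {m n : ℕ} (p : Fin m → ℝ) (hp : ∀ h, 0 ≤ p h ∧ p h ≤ 1)
    (F : Fin n → Finset (Fin m) → ℝ)
    (hFnonneg : ∀ l S, 0 ≤ F l S) (hFaligned : Aligned F) :
    ∏ l, bernExp p (F l) ≤ bernExp p (fun S => ∏ l, F l S) := by
  classical
  obtain ⟨D, hD⟩ : ∃ D : Finset (Fin m), ∀ l, Monotone fun S => F l (symmDiff S D) := by
    refine ⟨univ.filter fun h => ∀ l, DecreasingAt (F l) h,
      fun l => monotone_comp_symmDiff ?_ ?_⟩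
    · intro h hh
      exact (mem_filter.1 hh).2 l
    · intro h hh
      exact (hFaligned h).resolve_right (fun hdec => hh (by simpa using hdec)) l
  suffices ∀ s : Finset (Fin n),
      ∏ l ∈ s, bernExp p (F l) ≤ bernExp p (fun S => ∏ l ∈ s, F l S) from this univ
  intro s
  induction s using Finset.induction_on with
  | empty => simp [bernExp, sum_bern]
  | insert a s ha ih =>
    simp only [prod_insert ha]
    refine (mul_le_mul_of_nonneg_left ih (bernExp_nonneg hp (hFnonneg a))).trans ?_
    exact bernExp_mul_bernExp_le hp (hFnonneg a) (fun S => prod_nonneg fun l _ => hFnonneg l S)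
      (hD a) fun S T hST => prod_le_prod (fun l _ => hFnonneg l _) fun l _ => hD l hST
end

section
/- In the two-party parliamentary model, the parliamentary win-probability function g is increasing at every voter h ∈ A and decreasing at every voter h ∉ A; that is, for every S ⊆ H, g(S ∪ {h}) ≥ g(S) if h ∈ A and g(S ∪ {h}) ≤ g(S) if h ∉ A. -/
open Finset

/-- Presidential win-probability for party `a` (with supporter set `A`) given
turnout `S`: win on a strict majority of cast votes, ties broken by a fair coin. -/
noncomputable def presWin {m : ℕ} (A : Finset (Fin m)) (S : Finset (Fin m)) : ℝ :=
  if (S \ A).card < (S ∩ A).card then 1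
  else if (S ∩ A).card = (S \ A).card then 1 / 2 else 0

/-- Probability that party `a` is awarded district `D` given turnout `S`. -/
noncomputable def distWin {m : ℕ} (A D S : Finset (Fin m)) : ℝ :=
  if ((S ∩ D) \ A).card < (S ∩ A ∩ D).card then 1
  else if (S ∩ A ∩ D).card = ((S ∩ D) \ A).card then 1 / 2 else 0

/-- Probability of winning parliament given `w` districts out of `k`:  a strict
majority of the districts wins, an exact tie is broken by a fair coin. -/
noncomputable def majOf (k w : ℕ) : ℝ :=
  if k < 2 * w then 1 else if 2 * w = k then 1 / 2 else 0

/-- Parliamentary win-probability for party `a` (supporter set `A`, districts `D`)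
given turnout `S`: each district is awarded independently with probability
`distWin A (D j) S`, and party `a` wins parliament on a majority of districts. -/
noncomputable def parlWin {m k : ℕ} (A : Finset (Fin m)) (D : Fin k → Finset (Fin m))
    (S : Finset (Fin m)) : ℝ :=
  ∑ W : Finset (Fin k),
    (∏ j ∈ W, distWin A (D j) S) * (∏ j ∈ Wᶜ, (1 - distWin A (D j) S)) * majOf k W.card

/-- The expectation of a monotone function of a random subset of `s`, whose elements are included
independently, is monotone in the inclusion probabilities. -/
theorem sum_powerset_prod_mul_le_of_monotone {ι : Type*} [DecidableEq ι] {u v : ι → ℝ}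
    (hu : ∀ i, 0 ≤ u i) (huv : ∀ i, u i ≤ v i) (hv : ∀ i, v i ≤ 1) (s : Finset ι)
    {f : Finset ι → ℝ} (hf : Monotone f) :
    ∑ W ∈ s.powerset, (∏ i ∈ W, u i) * (∏ i ∈ s \ W, (1 - u i)) * f W ≤
      ∑ W ∈ s.powerset, (∏ i ∈ W, v i) * (∏ i ∈ s \ W, (1 - v i)) * f W := by
  induction s using Finset.induction_on generalizing f with
  | empty => simp
  | insert a s ha ih =>
    have condition_on (w : ι → ℝ) :
        ∑ W ∈ (insert a s).powerset, (∏ i ∈ W, w i) * (∏ i ∈ insert a s \ W, (1 - w i)) * f W =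
          ∑ W ∈ s.powerset, (∏ i ∈ W, w i) * (∏ i ∈ s \ W, (1 - w i)) *
            ((1 - w a) * f W + w a * f (insert a W)) := by
      rw [sum_powerset_insert ha, ← sum_add_distrib]
      refine sum_congr rfl fun W hW => ?_
      have haW : a ∉ W := fun h => ha (mem_powerset.1 hW h)
      rw [insert_sdiff_of_notMem _ haW, prod_insert (by simp [ha]), prod_insert haW,
        insert_sdiff_insert, sdiff_insert_of_notMem ha]
      ring
    rw [condition_on u, condition_on v]
    have hmono : Monotone fun W => (1 - u a) * f W + u a * f (insert a W) := fun W X h =>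
      add_le_add
        (mul_le_mul_of_nonneg_left (hf h) (sub_nonneg.2 ((huv a).trans (hv a))))
        (mul_le_mul_of_nonneg_left (hf (insert_subset_insert a h)) (hu a))
    refine (ih hmono).trans (sum_le_sum fun W _ => mul_le_mul_of_nonneg_left ?_ ?_)
    · nlinarith [huv a, hf (subset_insert a W)]
    · exact mul_nonneg (prod_nonneg fun i _ => (hu i).trans (huv i))
        (prod_nonneg fun i _ => sub_nonneg.2 (hv i))

theorem majOf_monotone (k : ℕ) : Monotone (majOf k) := by
  intro w x hwx
  unfold majOf
  split_ifs <;> first | omega | norm_num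

theorem distWin_nonneg {m : ℕ} (A D S : Finset (Fin m)) : 0 ≤ distWin A D S := by
  unfold distWin
  split_ifs <;> norm_num

theorem distWin_le_one {m : ℕ} (A D S : Finset (Fin m)) : distWin A D S ≤ 1 := by
  unfold distWin
  split_ifs <;> norm_num

theorem distWin_le_distWin {m : ℕ} {A D S T : Finset (Fin m)}
    (hA : S ∩ A ⊆ T ∩ A) (hB : T \ A ⊆ S \ A) : distWin A D S ≤ distWin A D T := by
  have hsupp : (S ∩ A ∩ D).card ≤ (T ∩ A ∩ D).card :=
    card_le_card (inter_subset_inter_right hA)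
  have hopp : ((T ∩ D) \ A).card ≤ ((S ∩ D) \ A).card := by
    refine card_le_card fun x hx => ?_
    have hxB := @hB x
    simp only [mem_sdiff, mem_inter] at hx hxB ⊢
    tauto
  unfold distWin
  split_ifs <;> first | omega | norm_num

theorem parlWin_le_parlWin {m k : ℕ} {A S T : Finset (Fin m)} (D : Fin k → Finset (Fin m))
    (hA : S ∩ A ⊆ T ∩ A) (hB : T \ A ⊆ S \ A) : parlWin A D S ≤ parlWin A D T := by
  simpa [parlWin, compl_eq_univ_sdiff] using
    sum_powerset_prod_mul_le_of_monotone (fun j => distWin_nonneg A (D j) S)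
      (fun j => distWin_le_distWin hA hB) (fun j => distWin_le_one A (D j) T) univ
      ((majOf_monotone k).comp card_mono)

/-- The parliamentary win-probability function is increasing at every supporter of
party `a` and decreasing at every supporter of the rival party. -/
theorem parlWin_monotone {m k : ℕ} (A : Finset (Fin m))
    (D : Fin k → Finset (Fin m)) (hD : ∀ h : Fin m, ∃! j, h ∈ D j)
    (h : Fin m) (S : Finset (Fin m)) :
    (h ∈ A → parlWin A D S ≤ parlWin A D (insert h S)) ∧
    (h ∉ A → parlWin A D (insert h S) ≤ parlWin A D S) := by
  constructor <;> intro hh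
  · exact parlWin_le_parlWin D (inter_subset_inter_right (subset_insert h S))
      (insert_sdiff_of_mem S hh).subset
  · exact parlWin_le_parlWin D (insert_inter_of_notMem hh).subset
      (sdiff_subset_sdiff (subset_insert h S) le_rfl)
end
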